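/- The algebra homomorphism H_n → End_{U_q(gl(1|1))}(V^{⊗n}) defined by H_i ↦ Ȟ_i is surjective; that is, every ℂ(q)-linear endomorphism of V^{⊗n} commuting with the actions of E, F and all q^h lies in the unital subalgebra generated by Ȟ_1,...,Ȟ_{n-1}. -/

import Mathlib

open scoped Classical

set_option maxHeartbeats 1000000
set_option synthInstance.maxHeartbeats 200000

noncomputable section

abbrev K : Type := RatFunc ℂ

noncomputable def q : K := RatFunc.X

/-- The quantum integer `[k] = (q^k - q^{-k})/(q - q^{-1})`. -/
noncomputable def qnum (k : ℕ) : K := (q ^ k - q⁻¹ ^ k) / (q - q⁻¹)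

/-- The quantum factorial `[k]! = [k][k-1]⋯[1]`. -/
noncomputable def qfact : ℕ → K
  | 0 => 1
  | k + 1 => qnum (k + 1) * qfact k

/-- The underlying vector space of `V(a_1) ⊗ ⋯ ⊗ V(a_n)`, with standard basis indexed by
sequences `η ∈ {0,1}^n`. -/
abbrev V (n : ℕ) : Type := (Fin n → Fin 2) → K

/-- The standard basis vector `v_η`. -/
noncomputable def eb {n : ℕ} (η : Fin n → Fin 2) : V n := fun γ => if γ = η then 1 else 0

/-- The number of `1`s in `γ` strictly before position `i` (the Koszul sign exponent). -/
def onesBefore {n : ℕ} (γ : Fin n → Fin 2) (i : Fin n) : ℕ :=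
  (Finset.univ.filter (fun k => k < i ∧ γ k = 1)).card

/-- The action of `E` on `V(a_1) ⊗ ⋯ ⊗ V(a_n)` (via the iterated comultiplication
`Δ(E) = E ⊗ K⁻¹ + 1 ⊗ E`, with the Koszul sign rule). -/
noncomputable def Eop (a : ℕ → ℕ) (n : ℕ) : Module.End K (V n) where
  toFun f := fun γ => ∑ i : Fin n,
    if γ i = 0 then
      ((-1 : K) ^ onesBefore γ i) * qnum (a i)
        * q ^ (-((∑ j ∈ Finset.univ.filter (fun j => i < j), a j : ℕ) : ℤ))
        * f (Function.update γ i 1)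
    else 0
  map_add' f g := by
    funext γ
    simp only [Pi.add_apply, ← Finset.sum_add_distrib]
    refine Finset.sum_congr rfl fun i _ => ?_
    split_ifs <;> ring
  map_smul' c f := by
    funext γ
    simp only [Pi.smul_apply, smul_eq_mul, RingHom.id_apply, Finset.mul_sum]
    refine Finset.sum_congr rfl fun i _ => ?_
    split_ifs <;> ring

/-- The action of `F` on `V(a_1) ⊗ ⋯ ⊗ V(a_n)` (via the iterated comultiplication
`Δ(F) = F ⊗ 1 + K ⊗ F`, with the Koszul sign rule). -/
noncomputable def Fop (a : ℕ → ℕ) (n : ℕ) : Module.End K (V n) where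
  toFun f := fun γ => ∑ i : Fin n,
    if γ i = 1 then
      ((-1 : K) ^ onesBefore γ i)
        * q ^ (∑ j ∈ Finset.univ.filter (fun j => j < i), a j)
        * f (Function.update γ i 0)
    else 0
  map_add' f g := by
    funext γ
    simp only [Pi.add_apply, ← Finset.sum_add_distrib]
    refine Finset.sum_congr rfl fun i _ => ?_
    split_ifs <;> ring
  map_smul' c f := by
    funext γ
    simp only [Pi.smul_apply, smul_eq_mul, RingHom.id_apply, Finset.mul_sum]
    refine Finset.sum_congr rfl fun i _ => ?_
    split_ifs <;> ring

/-- The action of `q^h` for `h = c·h₁ + d·h₂` on `V(a_1) ⊗ ⋯ ⊗ V(a_n)`: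
the basis vector `v^{a_i}_0` has weight `a_i ε₁` and `v^{a_i}_1` has weight
`(a_i - 1) ε₁ + ε₂`. -/
noncomputable def Kop (a : ℕ → ℕ) (n : ℕ) (c d : ℤ) : Module.End K (V n) where
  toFun f := fun γ =>
    q ^ (∑ i : Fin n, (if γ i = 0 then c * (a i : ℤ) else c * ((a i : ℤ) - 1) + d)) * f γ
  map_add' f g := by
    funext γ
    simp only [Pi.add_apply]
    ring
  map_smul' c' f := by
    funext γ
    simp only [Pi.smul_apply, smul_eq_mul, RingHom.id_apply]
    ring

/-- The endomorphism `Ȟ_i` of `V^{⊗n}` (acting on the `i`-th and `(i+1)`-st tensor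
factors, 0-based). -/
noncomputable def Hop (n : ℕ) (i : ℕ) (hi : i + 1 < n) : Module.End K (V n) where
  toFun f := fun γ =>
    if γ ⟨i, by omega⟩ = 0 ∧ γ ⟨i + 1, hi⟩ = 0 then q⁻¹ * f γ
    else if γ ⟨i, by omega⟩ = 1 ∧ γ ⟨i + 1, hi⟩ = 1 then (-q) * f γ
    else if γ ⟨i, by omega⟩ = 0 ∧ γ ⟨i + 1, hi⟩ = 1 then
      f (fun k => γ (Equiv.swap ⟨i, by omega⟩ ⟨i + 1, hi⟩ k))
    else (q⁻¹ - q) * f γ + f (fun k => γ (Equiv.swap ⟨i, by omega⟩ ⟨i + 1, hi⟩ k))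
  map_add' f g := by
    funext γ
    simp only [Pi.add_apply]
    split_ifs <;> ring
  map_smul' c f := by
    funext γ
    simp only [Pi.smul_apply, smul_eq_mul, RingHom.id_apply]
    split_ifs <;> ring

/-- The constant sequence `(1,1,…)`: all tensor factors are the vector representation. -/
def one' : ℕ → ℕ := fun _ => 1

/-!
By the double centralizer theorem it is enough that the algebra `A` generated by the `Ȟ_i` is
semisimple and that `T` commutes with every `X` in the centralizer of `A`.

Semisimplicity: each `Ȟ_i` has a symmetric matrix with entries fixed by the conjugation of `ℂ(q)`
that fixes `q`, so `A` is stable under the conjugate transpose. The hermitian form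
`∑ conj(f_γ) f_γ` is anisotropic, as one sees by specializing `q` to real numbers; hence `a* a = 0`
forces `a = 0` in `A`, which makes the Jacobson radical vanish.

The centralizer of `A`: if `η` is nondecreasing, `v_η` is an eigenvector of each `Ȟ_i` whose two
factors lie in one block of `η`, and then so is `X v_η`, with the same eigenvalue. A coordinate of
such an eigenvector vanishes as soon as two entries of one block are changed, and the coordinates
with the same number of changes in each block are determined by one of them. This leaves four
degrees of freedom, which are filled by `v_η`, `E v_η`, `F v_η` and `F E v_η`, so `X` agrees at
`v_η` with a polynomial `Y` in `E` and `F`. Because `X` and `Y` commute with `A`, they also agree at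
all `v_{η ∘ σ}`, and these span the weight space of `v_η`, which `T` preserves.
-/

section StarAlgebra

theorem eq_zero_of_isSelfAdjoint_of_pow_two_pow_eq_zero {R : Type*} [MonoidWithZero R] [StarMul R]
    (h : ∀ a : R, star a * a = 0 → a = 0) {b : R} (hb : IsSelfAdjoint b) (m : ℕ)
    (hm : b ^ 2 ^ m = 0) : b = 0 := by
  induction m with
  | zero => simpa using hm
  | succ m ih =>
    refine ih (h _ ?_)
    rw [(hb.pow _).star_eq, ← pow_add, ← two_mul, ← pow_succ', hm]

theorem isSemisimpleRing_of_star_mul_self_eq_zero {R : Type*} [Ring R] [StarRing R]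
    [IsArtinianRing R] (h : ∀ a : R, star a * a = 0 → a = 0) : IsSemisimpleRing R := by
  rw [IsArtinianRing.isSemisimpleRing_iff_jacobson, eq_bot_iff]
  intro a ha
  obtain ⟨k, hk⟩ := IsSemiprimaryRing.isNilpotent (R := R)
  have hpow : (star a * a) ^ k = 0 := by
    simpa [hk] using Ideal.pow_mem_pow (Ideal.mul_mem_left _ (star a) ha) k
  exact h a <| eq_zero_of_isSelfAdjoint_of_pow_two_pow_eq_zero h (.star_mul_self a) k <|
    pow_eq_zero_of_le k.lt_two_pow_self.le hpow

theorem isSemisimpleRing_adjoin_of_isHermitian {𝕜 ι : Type*} [Field 𝕜] [StarRing 𝕜] [Fintype ι]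
    [DecidableEq ι] (haniso : ∀ v : ι → 𝕜, star v ⬝ᵥ v = 0 → v = 0)
    {s : Set (Module.End 𝕜 (ι → 𝕜))} (hs : ∀ f ∈ s, (LinearMap.toMatrix' f).IsHermitian) :
    IsSemisimpleRing (Algebra.adjoin 𝕜 s) := by
  let e : Module.End 𝕜 (ι → 𝕜) ≃ₐ[𝕜] Matrix ι ι 𝕜 := LinearMap.toMatrixAlgEquiv'
  have hstar : star (e '' s) ⊆ e '' s := by
    rintro a ⟨f, hf, hfa⟩
    exact ⟨f, hf, (hs f hf).symm.trans (star_eq_iff_star_eq.mp hfa.symm)⟩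
  let S : StarSubalgebra 𝕜 (Matrix ι ι 𝕜) := StarAlgebra.adjoin 𝕜 (e '' s)
  have hS : (Algebra.adjoin 𝕜 s).map (e : _ →ₐ[𝕜] _) = S.toSubalgebra := by
    rw [AlgHom.map_adjoin]
    change Algebra.adjoin 𝕜 (e '' s) = Algebra.adjoin 𝕜 (e '' s ∪ star (e '' s))
    rw [Set.union_eq_self_of_subset_right hstar]
  have : Module.Finite 𝕜 S := inferInstanceAs (Module.Finite 𝕜 S.toSubalgebra.toSubmodule)
  have : IsArtinianRing S := .of_finite 𝕜 S
  have : IsSemisimpleRing S := isSemisimpleRing_of_star_mul_self_eq_zero fun a ha => by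
    refine Subtype.ext <| Matrix.ext_col fun j => haniso _ ?_
    exact congrFun (congrFun (congrArg Subtype.val ha) j) j
  let eS : Algebra.adjoin 𝕜 s ≃ₐ[𝕜] S.toSubalgebra :=
    (e.subalgebraMap _).trans (Subalgebra.equivOfEq _ _ hS)
  exact RingEquiv.isSemisimpleRing (R := S) eS.symm.toRingEquiv

theorem centralizer_centralizer_eq_self {R M : Type*} [CommRing R] [AddCommGroup M] [Module R M]
    [Module.Finite R M] (A : Subalgebra R (Module.End R M)) [IsSemisimpleRing A] :
    Subalgebra.centralizer R (Subalgebra.centralizer R (A : Set (Module.End R M)) :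
      Set (Module.End R M)) = A := by
  refine le_antisymm (fun T hT => ?_) A.le_centralizer_centralizer
  have hcomm (X : Module.End A M) (v : M) : T (X v) = X (T v) := by
    have hX : X.restrictScalars R ∈ Subalgebra.centralizer R (A : Set (Module.End R M)) :=
      fun a ha => LinearMap.ext fun w => (X.map_smul ⟨a, ha⟩ w).symm
    exact LinearMap.congr_fun (hT _ hX).symm v
  let T' : Module.End (Module.End A M) M :=
    { toFun := T, map_add' := T.map_add, map_smul' := hcomm }
  obtain ⟨t, ht⟩ := Module.Finite.fg_top (R := R) (M := M)
  obtain ⟨a, ha⟩ := jacobson_density T' t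
  have : T = a := LinearMap.ext_on ht ha
  exact this ▸ a.2

end StarAlgebra

section RatFunc

open Polynomial

variable {𝕜 : Type*}

/-- The coefficientwise conjugation of rational functions, fixing the variable. -/
instance ratFuncStarRing [Field 𝕜] [StarRing 𝕜] : StarRing (RatFunc 𝕜) where
  star := IsFractionRing.ringEquivOfRingEquiv (A := 𝕜[X]) (mapEquiv (starRingAut : 𝕜 ≃+* 𝕜))
  star_involutive x := by
    obtain ⟨a, b, -, rfl⟩ := IsFractionRing.div_surjective (A := 𝕜[X]) x
    have hconj : ((starRingAut : 𝕜 ≃+* 𝕜) : 𝕜 →+* 𝕜).comp (starRingAut : 𝕜 ≃+* 𝕜) = .id 𝕜 :=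
      RingHom.ext star_star
    simp [Polynomial.map_map, hconj]
  star_mul x y := by rw [mul_comm, map_mul]
  star_add := map_add _

theorem star_algebraMap_ratFunc [Field 𝕜] [StarRing 𝕜] (p : 𝕜[X]) :
    star (algebraMap 𝕜[X] (RatFunc 𝕜) p) = algebraMap 𝕜[X] (RatFunc 𝕜) (p.map (starRingEnd 𝕜)) :=
  IsFractionRing.ringEquivOfRingEquiv_algebraMap _ p

theorem star_ratFunc_X [Field 𝕜] [StarRing 𝕜] : star (RatFunc.X : RatFunc 𝕜) = RatFunc.X := by
  rw [← RatFunc.algebraMap_X, star_algebraMap_ratFunc, map_X]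

variable [RCLike 𝕜] {ι : Type*} [Fintype ι]

theorem eval_map_conj_ofReal (p : 𝕜[X]) (r : ℝ) :
    (p.map (starRingEnd 𝕜)).eval (r : 𝕜) = star (p.eval (r : 𝕜)) := by
  conv_lhs => rw [← RCLike.conj_ofReal r]
  rw [eval_map, eval₂_at_apply, starRingEnd_apply]

open ComplexOrder in
theorem polynomial_eq_zero_of_sum_conj_mul_self (p : ι → 𝕜[X])
    (h : ∑ i, (p i).map (starRingEnd 𝕜) * p i = 0) : p = 0 := by
  have hreal (r : ℝ) : (fun i => (p i).eval (r : 𝕜)) = 0 := by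
    rw [← dotProduct_star_self_eq_zero]
    simpa [eval_finsetSum, eval_map_conj_ofReal, dotProduct, mul_comm] using
      congrArg (eval (r : 𝕜)) h
  funext i
  refine eq_zero_of_infinite_isRoot _ <|
    (Set.infinite_range_of_injective RCLike.ofReal_injective).mono ?_
  rintro _ ⟨r, rfl⟩
  exact congrFun (hreal r) i

theorem ratFunc_eq_zero_of_star_dotProduct_self (f : ι → RatFunc 𝕜) (h : star f ⬝ᵥ f = 0) :
    f = 0 := by
  obtain ⟨b, hb⟩ := IsLocalization.exist_integer_multiples_of_finite (nonZeroDivisors 𝕜[X]) f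
  choose p hp using hb
  simp only [Algebra.smul_def] at hp
  set c : RatFunc 𝕜 := algebraMap 𝕜[X] (RatFunc 𝕜) b
  have hc0 : c ≠ 0 := IsFractionRing.to_map_ne_zero_of_mem_nonZeroDivisors b.2
  have hp0 : p = 0 := by
    refine polynomial_eq_zero_of_sum_conj_mul_self p <| IsFractionRing.injective 𝕜[X] (RatFunc 𝕜) ?_
    have hterm (i : ι) : algebraMap 𝕜[X] (RatFunc 𝕜) ((p i).map (starRingEnd 𝕜) * p i) =
        star c * c * (star (f i) * f i) := by
      rw [map_mul, ← star_algebraMap_ratFunc, hp, star_mul]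
      ring
    rw [map_zero, map_sum, Finset.sum_congr rfl fun i _ => hterm i, ← Finset.mul_sum]
    exact mul_eq_zero_of_right _ h
  funext i
  simpa [hp0, hc0] using hp i

end RatFunc

section Hecke

theorem comp_swap_comp_swap {α β : Type*} [DecidableEq α] (f : α → β) (a b : α) :
    (f ∘ Equiv.swap a b) ∘ Equiv.swap a b = f := by
  funext; simp

theorem comp_swap_of_apply_eq {α β : Type*} [DecidableEq α] {f : α → β} {a b : α} (h : f a = f b) :
    f ∘ Equiv.swap a b = f := by
  rw [Equiv.comp_swap_eq_update, h, Function.update_eq_self, ← h, Function.update_eq_self]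

variable {n : ℕ} {i j : Fin n}

/-- The diagonal matrix entry of `Ȟ` at the basis vector `v_x ⊗ v_y`. -/
def heckeDiag (x y : Fin 2) : K :=
  if x = y then if x = 0 then q⁻¹ else -q else if x = 0 then 0 else q⁻¹ - q

/-- The operator `Ȟ` acting on the tensor factors `i` and `j`, which need not be adjacent. -/
def hecke (i j : Fin n) : Module.End K (V n) :=
  LinearMap.pi fun γ => heckeDiag (γ i) (γ j) • LinearMap.proj γ +
    if γ i = γ j then 0 else LinearMap.proj (γ ∘ Equiv.swap i j)

theorem hecke_apply (f : V n) (γ : Fin n → Fin 2) :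
    hecke i j f γ =
      heckeDiag (γ i) (γ j) * f γ + if γ i = γ j then 0 else f (γ ∘ Equiv.swap i j) := by
  simp only [hecke, LinearMap.pi_apply, LinearMap.add_apply, LinearMap.smul_apply,
    LinearMap.proj_apply, smul_eq_mul]
  split_ifs <;> rfl

theorem Hop_eq_hecke (m : ℕ) (hm : m + 1 < n) : Hop n m hm = hecke ⟨m, by omega⟩ ⟨m + 1, hm⟩ := by
  refine LinearMap.ext fun f => funext fun γ => ?_
  rw [hecke_apply]
  simp only [Hop, heckeDiag, LinearMap.coe_mk, AddHom.coe_mk, Function.comp_def]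
  generalize γ ⟨m, by omega⟩ = x
  generalize γ ⟨m + 1, hm⟩ = y
  fin_cases x <;> fin_cases y <;> simp

variable (n) in
/-- The operators `Ȟ_1, …, Ȟ_{n-1}`, indexed by the pairs of adjacent tensor factors. -/
def heckeGenerators : Set (Module.End K (V n)) :=
  {X | ∃ i j : Fin n, i ⋖ j ∧ X = hecke i j}

theorem setOf_Hop_eq_heckeGenerators :
    {X : Module.End K (V n) | ∃ (i : ℕ) (hi : i + 1 < n), X = Hop n i hi} = heckeGenerators n := by
  ext X
  constructor
  · rintro ⟨m, hm, rfl⟩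
    exact ⟨_, _, Fin.covBy_iff.mpr (Nat.covBy_iff_add_one_eq.mpr rfl), Hop_eq_hecke m hm⟩
  · rintro ⟨i, ⟨_, hj⟩, hij, rfl⟩
    obtain rfl := Nat.covBy_iff_add_one_eq.mp (Fin.covBy_iff.mp hij)
    exact ⟨i, hj, (Hop_eq_hecke _ hj).symm⟩

theorem q_ne_zero : q ≠ 0 := RatFunc.X_ne_zero

theorem star_heckeDiag (x y : Fin 2) : star (heckeDiag x y) = heckeDiag x y := by
  have hq : star q = q := star_ratFunc_X
  simp only [heckeDiag]
  split_ifs <;> simp [hq]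

theorem isHermitian_toMatrix'_hecke (i j : Fin n) :
    (LinearMap.toMatrix' (hecke i j)).IsHermitian := by
  have hentry (γ δ : Fin n → Fin 2) : LinearMap.toMatrix' (hecke i j) γ δ =
      (if γ = δ then heckeDiag (γ i) (γ j) else 0) +
        if γ i ≠ γ j ∧ γ ∘ Equiv.swap i j = δ then 1 else 0 := by
    rw [LinearMap.toMatrix'_apply, hecke_apply]
    split_ifs <;> simp_all
  have hsymm (γ δ : Fin n → Fin 2) (h : γ i ≠ γ j ∧ γ ∘ Equiv.swap i j = δ) :
      δ i ≠ δ j ∧ δ ∘ Equiv.swap i j = γ := by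
    obtain ⟨hγ, rfl⟩ := h
    simpa [comp_swap_comp_swap] using hγ.symm
  refine Matrix.IsHermitian.ext fun γ δ => ?_
  rw [hentry, hentry, star_add, apply_ite star, apply_ite star, star_heckeDiag, star_zero, star_one]
  congr 1
  · split_ifs <;> simp_all
  · exact if_congr ⟨hsymm δ γ, hsymm γ δ⟩ rfl rfl

instance isSemisimpleRing_adjoin_heckeGenerators :
    IsSemisimpleRing (Algebra.adjoin K (heckeGenerators n)) := by
  refine isSemisimpleRing_adjoin_of_isHermitian (𝕜 := K)
    (ratFunc_eq_zero_of_star_dotProduct_self (𝕜 := ℂ)) ?_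
  rintro _ ⟨i, j, -, rfl⟩
  exact isHermitian_toMatrix'_hecke i j

end Hecke

section Flip

variable {n : ℕ} {i j : Fin n}

theorem onesBefore_of_covBy (hij : i ⋖ j) (γ : Fin n → Fin 2) :
    onesBefore γ j = onesBefore γ i + if γ i = 1 then 1 else 0 := by
  have hfilter : (Finset.univ.filter fun k => k < j ∧ γ k = 1) =
      (Finset.univ.filter fun k => k < i ∧ γ k = 1) ∪ if γ i = 1 then {i} else ∅ := by
    ext k
    have : k < j ↔ k < i ∨ k = i := by rw [hij.lt_iff_le_left, le_iff_lt_or_eq]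
    split_ifs with h <;> simp [this] <;> grind
  rw [onesBefore, onesBefore, hfilter, Finset.card_union_of_disjoint] <;> split_ifs <;> simp

theorem onesBefore_comp_swap (hij : i ⋖ j) {k : Fin n} (hk : k ≠ j) (γ : Fin n → Fin 2) :
    onesBefore (γ ∘ Equiv.swap i j) k = onesBefore γ k := by
  refine Finset.card_equiv (Equiv.swap i j) fun l => ?_
  have hlt : Equiv.swap i j l < k ↔ l < k := by
    have hij_lt := hij.lt
    have := hij.2 (c := k)
    grind
  simp [hlt]

/-- The odd operator sending `v_b` to `v_a` and `v_a` to `0` in the tensor factor `i` (for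
`a ≠ b`), with its Koszul sign. -/
def signedFlip (a b : Fin 2) (i : Fin n) : Module.End K (V n) :=
  LinearMap.pi fun γ =>
    if γ i = a then (-1 : K) ^ onesBefore γ i • LinearMap.proj (Function.update γ i b) else 0

/-- A weighted sum of the operators `signedFlip`: the common form of `E` and `F`. -/
def weightedFlip (a b : Fin 2) (c : Fin n → K) : Module.End K (V n) :=
  ∑ i, c i • signedFlip a b i

theorem signedFlip_apply (a b : Fin 2) (i : Fin n) (f : V n) (γ : Fin n → Fin 2) :
    signedFlip a b i f γ =
      if γ i = a then (-1 : K) ^ onesBefore γ i * f (Function.update γ i b) else 0 := by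
  simp only [signedFlip, LinearMap.pi_apply]
  split_ifs <;> simp

theorem commute_signedFlip_hecke (hij : i ⋖ j) {k : Fin n} (hki : k ≠ i) (hkj : k ≠ j)
    (a b : Fin 2) : Commute (signedFlip a b k) (hecke i j) := by
  refine LinearMap.ext fun f => funext fun γ => ?_
  have hswap : Function.update (γ ∘ Equiv.swap i j) k b =
      Function.update γ k b ∘ Equiv.swap i j := by
    rw [Function.update_comp_equiv, Equiv.symm_swap, Equiv.swap_apply_of_ne_of_ne hki hkj]
  simp only [Module.End.mul_apply, signedFlip_apply, hecke_apply, Function.comp_apply,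
    Function.update_of_ne hki.symm, Function.update_of_ne hkj.symm,
    Equiv.swap_apply_of_ne_of_ne hki hkj, onesBefore_comp_swap hij hkj, hswap]
  split_ifs <;> ring

theorem commute_signedFlip_add_smul_hecke (hij : i ⋖ j) {a b : Fin 2} (hab : a ≠ b) :
    Commute (signedFlip a b i + q • signedFlip a b j) (hecke i j) := by
  refine LinearMap.ext fun f => funext fun γ => ?_
  have hne := hij.ne
  have hq := q_ne_zero
  have hswapi : Function.update γ i b ∘ Equiv.swap i j =
      Function.update (γ ∘ Equiv.swap i j) j b := by
    simp [Function.update_comp_equiv]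
  have hswapj : Function.update γ j b ∘ Equiv.swap i j =
      Function.update (γ ∘ Equiv.swap i j) i b := by
    simp [Function.update_comp_equiv]
  have hfixed : γ i = γ j → γ ∘ Equiv.swap i j = γ := comp_swap_of_apply_eq
  have hfixedi (h : γ j = b) :
      Function.update (γ ∘ Equiv.swap i j) j b = Function.update γ i b := by
    rw [← hswapi, comp_swap_of_apply_eq (by simp [hne.symm, h])]
  have hfixedj (h : γ i = b) :
      Function.update (γ ∘ Equiv.swap i j) i b = Function.update γ j b := by
    rw [← hswapj, comp_swap_of_apply_eq (by simp [hne, h])]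
  simp only [Module.End.mul_apply, LinearMap.add_apply, LinearMap.smul_apply, Pi.add_apply,
    Pi.smul_apply, smul_eq_mul, signedFlip_apply, hecke_apply, onesBefore_of_covBy hij,
    onesBefore_comp_swap hij hne, Function.comp_apply, Equiv.swap_apply_left,
    Equiv.swap_apply_right, Function.update_self, Function.update_of_ne hne,
    Function.update_of_ne hne.symm, hswapi, hswapj]
  clear hswapi hswapj
  -- What is left is an identity for each of the four values of `(γ i, γ j)`.
  generalize γ i = x at *
  generalize γ j = y at *
  fin_cases a <;> fin_cases b <;> fin_cases x <;> fin_cases y <;>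
    simp [heckeDiag, *] at * <;> grind

theorem commute_weightedFlip_hecke (hij : i ⋖ j) {a b : Fin 2} (hab : a ≠ b) {c : Fin n → K}
    (hc : c j = q * c i) : Commute (weightedFlip a b c) (hecke i j) := by
  have hsplit : weightedFlip a b c = c i • (signedFlip a b i + q • signedFlip a b j) +
      ∑ k ∈ {i, j}ᶜ, c k • signedFlip a b k := by
    rw [weightedFlip, ← Finset.sum_add_sum_compl {i, j}, Finset.sum_pair hij.ne, hc, mul_comm,
      mul_smul, smul_add]
  rw [hsplit]
  refine ((commute_signedFlip_add_smul_hecke hij hab).smul_left _).add_left ?_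
  refine Commute.sum_left _ _ _ fun k hk => ?_
  obtain ⟨hki, hkj⟩ : k ≠ i ∧ k ≠ j := by simpa using hk
  exact (commute_signedFlip_hecke hij hki hkj a b).smul_left _

end Flip

section Permutations

theorem exists_perm_comp_eq_of_card_fiber_eq {α β : Type*} [Fintype α] [DecidableEq β]
    {f g : α → β}
    (h : ∀ b, Fintype.card {a // f a = b} = Fintype.card {a // g a = b}) :
    ∃ σ : Equiv.Perm α, f ∘ σ = g := by
  let e (b : β) : {a // g a = b} ≃ {a // f a = b} := Fintype.equivOfCardEq (h b).symm
  exact ⟨Equiv.ofFiberEquiv e, funext (Equiv.ofFiberEquiv_map e)⟩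

theorem mem_closure_swap_covBy_of_comp_eq {α β : Type*} [Finite α] [LinearOrder α]
    [LocallyFiniteOrder α] [PartialOrder β] {f : α → β} (hf : Monotone f) {σ : Equiv.Perm α}
    (hσ : f ∘ σ = f) :
    σ ∈ Subgroup.closure {τ | ∃ i j, i ⋖ j ∧ f i = f j ∧ τ = Equiv.swap i j} := by
  set S : Set (Equiv.Perm α) := {τ | ∃ i j, i ⋖ j ∧ f i = f j ∧ τ = Equiv.swap i j}
  have horbit {x y : α} (hxy : x ≤ y) (hf' : f x = f y) :
      y ∈ MulAction.orbit (Subgroup.closure S) x := by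
    induction le_iff_reflTransGen_covBy.mp hxy with
    | refl => exact MulAction.mem_orbit_self x
    | @tail b c hxb hbc ih =>
      have hle : x ≤ b := le_iff_reflTransGen_covBy.mpr hxb
      have hb : f x = f b := le_antisymm (hf hle) ((hf hbc.le).trans hf'.ge)
      have hswap : Equiv.swap b c ∈ Subgroup.closure S :=
        Subgroup.subset_closure ⟨b, c, hbc, hb.symm.trans hf', rfl⟩
      rw [← MulAction.orbit_eq_iff.mpr (ih hle hb)]
      exact ⟨⟨_, hswap⟩, Equiv.swap_apply_left b c⟩
  refine (mem_closure_isSwap ?_).mpr ⟨Set.toFinite _, fun x => ?_⟩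
  · rintro _ ⟨i, j, hij, -, rfl⟩
    exact ⟨i, j, hij.ne, rfl⟩
  · obtain hx | hx := le_total x (σ x)
    · exact horbit hx (congrFun hσ x).symm
    · exact MulAction.mem_orbit_symm.mp (horbit hx (congrFun hσ x))

end Permutations

section BlockEigenspace

variable {n : ℕ} {i j : Fin n} {η : Fin n → Fin 2}

theorem q_pow_injective : Function.Injective (q ^ · : ℕ → K) := by
  intro k l h
  simp only [q, ← RatFunc.algebraMap_X, ← map_pow] at h
  simpa using congrArg Polynomial.natDegree (IsFractionRing.injective (Polynomial ℂ) K h)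

theorem heckeDiag_ne {x y z : Fin 2} (h : ¬(y = x ∧ z = x)) : heckeDiag y z ≠ heckeDiag x x := by
  have hq := q_ne_zero
  have hq2 : q ^ 2 ≠ -1 := fun hq2 => by
    have : q ^ 4 = q ^ 0 := by linear_combination (q ^ 2 - 1) * hq2
    exact absurd (q_pow_injective this) (by decide)
  fin_cases x <;> fin_cases y <;> fin_cases z <;> simp [heckeDiag] at h ⊢ <;> grind

theorem hecke_eb (i j : Fin n) (γ : Fin n → Fin 2) :
    hecke i j (eb γ) = heckeDiag (γ i) (γ j) • eb γ +
      if γ i = γ j then 0 else eb (γ ∘ Equiv.swap i j) := by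
  funext δ
  have hswap : δ ∘ Equiv.swap i j = γ ↔ δ = γ ∘ Equiv.swap i j := by
    constructor <;> rintro rfl <;> rw [comp_swap_comp_swap]
  have hne : (γ ∘ Equiv.swap i j) i ≠ (γ ∘ Equiv.swap i j) j ↔ γ i ≠ γ j := by simp [eq_comm]
  rw [hecke_apply, Pi.add_apply, Pi.smul_apply, smul_eq_mul]
  congr 1
  · by_cases h : δ = γ <;> simp [eb, h]
  · by_cases h : δ = γ ∘ Equiv.swap i j
    · subst h
      by_cases hγ : γ i = γ j <;> simp_all [eb, comp_swap_comp_swap]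
    · split_ifs <;> simp [eb, hswap, h]

/-- The vectors on which every `Ȟ` between adjacent tensor factors of the same `η`-block acts as
on `v_η`. -/
def blockEigenspace (η : Fin n → Fin 2) : Submodule K (V n) :=
  ⨅ (i) (j) (_ : i ⋖ j) (_ : η i = η j), (hecke i j).eigenspace (heckeDiag (η i) (η j))

theorem mem_blockEigenspace_iff {u : V n} : u ∈ blockEigenspace η ↔
    ∀ i j, i ⋖ j → η i = η j → hecke i j u = heckeDiag (η i) (η j) • u := by
  simp only [blockEigenspace, Submodule.mem_iInf, Module.End.mem_eigenspace_iff]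

theorem apply_eb_mem_blockEigenspace {X : Module.End K (V n)}
    (hX : X ∈ Subalgebra.centralizer K (heckeGenerators n)) (η : Fin n → Fin 2) :
    X (eb η) ∈ blockEigenspace η := by
  refine mem_blockEigenspace_iff.mpr fun i j hij hη => ?_
  have hcomm := LinearMap.congr_fun (hX _ ⟨i, j, hij, rfl⟩) (eb η)
  rw [Module.End.mul_apply, Module.End.mul_apply, hecke_eb, if_pos hη, add_zero, map_smul] at hcomm
  exact hcomm

variable {u : V n}

theorem apply_eq_zero_of_covBy (hu : u ∈ blockEigenspace η) (hij : i ⋖ j) (hη : η i = η j)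
    {γ : Fin n → Fin 2} (hi : γ i ≠ η i) (hj : γ j ≠ η j) : u γ = 0 := by
  have hγ : γ i = γ j := by omega
  have h := congrFun (mem_blockEigenspace_iff.mp hu i j hij hη) γ
  rw [hecke_apply, if_pos hγ, add_zero, Pi.smul_apply, smul_eq_mul, ← hη] at h
  exact (mul_eq_mul_right_iff.mp h).resolve_left (heckeDiag_ne fun h => hi h.1)

theorem apply_comp_swap_eq_zero_iff (hu : u ∈ blockEigenspace η) (hij : i ⋖ j) (hη : η i = η j)
    (γ : Fin n → Fin 2) : u (γ ∘ Equiv.swap i j) = 0 ↔ u γ = 0 := by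
  by_cases hγ : γ i = γ j
  · rw [comp_swap_of_apply_eq hγ]
  have h := congrFun (mem_blockEigenspace_iff.mp hu i j hij hη) γ
  rw [hecke_apply, if_neg hγ, Pi.smul_apply, smul_eq_mul, ← hη] at h
  rw [eq_sub_of_add_eq' h, ← sub_mul, mul_eq_zero,
    or_iff_right (sub_ne_zero.mpr (heckeDiag_ne fun h => hγ (h.1.trans h.2.symm)).symm)]

theorem apply_comp_eq_zero_iff (hη : Monotone η) (hu : u ∈ blockEigenspace η)
    {σ : Equiv.Perm (Fin n)} (hσ : η ∘ σ = η) (γ : Fin n → Fin 2) : u (γ ∘ σ) = 0 ↔ u γ = 0 := by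
  have hmem := mem_closure_swap_covBy_of_comp_eq hη hσ
  clear hσ
  induction hmem using Subgroup.closure_induction generalizing γ with
  | mem τ hτ =>
    obtain ⟨i, j, hij, hη', rfl⟩ := hτ
    exact apply_comp_swap_eq_zero_iff hu hij hη' γ
  | one => rfl
  | mul σ τ _ _ hσ hτ => exact (hτ (γ ∘ σ)).trans (hσ γ)
  | inv σ _ hσ =>
    have hγ : (γ ∘ ⇑σ⁻¹) ∘ σ = γ := funext fun k => congrArg γ (σ.symm_apply_apply k)
    simpa only [hγ, iff_comm] using hσ (γ ∘ ⇑σ⁻¹)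

/-- The number of places of the `η`-block `x` at which `γ` differs from `η`. -/
def mismatch (η γ : Fin n → Fin 2) (x : Fin 2) : ℕ := Fintype.card {k // η k = x ∧ γ k ≠ x}

theorem exists_perm_of_mismatch_eq {γ δ : Fin n → Fin 2} (h : mismatch η γ = mismatch η δ) :
    ∃ σ : Equiv.Perm (Fin n), η ∘ σ = η ∧ γ ∘ σ = δ := by
  have hne (γ : Fin n → Fin 2) {x y : Fin 2} (hxy : y ≠ x) :
      Fintype.card {k // (η k, γ k) = (x, y)} = mismatch η γ x :=
    Fintype.card_congr <| Equiv.subtypeEquivRight fun k => by rw [Prod.mk.injEq]; omega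
  have heq (γ : Fin n → Fin 2) (x : Fin 2) :
      Fintype.card {k // (η k, γ k) = (x, x)} + mismatch η γ x = Fintype.card {k // η k = x} := by
    simp only [Prod.mk.injEq, mismatch, Fintype.card_subtype]
    rw [← Finset.card_filter_add_card_filter_not (s := {k | η k = x}) (γ · = x)]
    simp only [Finset.filter_filter, ne_eq]
  obtain ⟨σ, hσ⟩ := exists_perm_comp_eq_of_card_fiber_eq (f := fun k => (η k, γ k))
    (g := fun k => (η k, δ k)) fun ⟨x, y⟩ => by
      by_cases hxy : y = x
      · subst hxy
        have := congrFun h y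
        have := heq γ y
        have := heq δ y
        omega
      · rw [hne γ hxy, hne δ hxy, h]
  exact ⟨σ, funext fun k => congrArg Prod.fst (congrFun hσ k),
    funext fun k => congrArg Prod.snd (congrFun hσ k)⟩

theorem apply_eq_zero_of_one_lt_mismatch (hη : Monotone η) (hu : u ∈ blockEigenspace η)
    {γ : Fin n → Fin 2} {x : Fin 2} (h : 1 < mismatch η γ x) : u γ = 0 := by
  obtain ⟨⟨p, hp, hγp⟩, ⟨r, hr, hγr⟩, hne⟩ := Fintype.one_lt_card_iff.mp h
  rw [Ne, Subtype.mk.injEq] at hne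
  wlog hpr : p < r generalizing p r
  · exact this r hr hγr p hp hγp (Ne.symm hne) ((le_of_not_gt hpr).lt_of_ne' hne)
  obtain ⟨s, hps, hsr⟩ := exists_covBy_le_of_lt hpr
  have hs : η s = x := le_antisymm (hr ▸ hη hsr) (hp ▸ hη hps.le)
  have hσ : η ∘ Equiv.swap s r = η := comp_swap_of_apply_eq (hs.trans hr.symm)
  rw [← apply_comp_eq_zero_iff hη hu hσ]
  refine apply_eq_zero_of_covBy hu hps (hp.trans hs.symm) ?_ ?_
  · rwa [Function.comp_apply, Equiv.swap_apply_of_ne_of_ne hps.ne hne, hp]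
  · rwa [Function.comp_apply, Equiv.swap_apply_left, hs]

theorem apply_eq_zero_iff_of_mismatch_eq (hη : Monotone η) (hu : u ∈ blockEigenspace η)
    {γ δ : Fin n → Fin 2} (h : mismatch η γ = mismatch η δ) : u γ = 0 ↔ u δ = 0 := by
  obtain ⟨σ, hσ, rfl⟩ := exists_perm_of_mismatch_eq h
  exact (apply_comp_eq_zero_iff hη hu hσ γ).symm

theorem eq_of_apply_eq_of_mismatch_le_one (hη : Monotone η) {w : V n}
    (hu : u ∈ blockEigenspace η) (hw : w ∈ blockEigenspace η)
    (h : ∀ γ, mismatch η γ ≤ 1 → u γ = w γ) : u = w := by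
  funext γ
  by_cases hγ : mismatch η γ ≤ 1
  · exact h γ hγ
  · obtain ⟨x, hx⟩ : ∃ x, 1 < mismatch η γ x := by
      simpa only [Pi.le_def, not_forall, not_le, Pi.one_apply] using hγ
    rw [apply_eq_zero_of_one_lt_mismatch hη hu hx, apply_eq_zero_of_one_lt_mismatch hη hw hx]

theorem exists_mem_apply_eq_insert (hη : Monotone η) (hu : u ∈ blockEigenspace η)
    {W : Submodule K (V n)} (hW : W ≤ blockEigenspace η) {S : Set (Fin 2 → ℕ)}
    (hS : ∃ y ∈ W, ∀ γ, mismatch η γ ∈ S → y γ = u γ) {w : V n} (hw : w ∈ W) {m : Fin 2 → ℕ}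
    (hwm : ∀ γ, mismatch η γ = m → w γ ≠ 0) (hwS : ∀ γ, mismatch η γ ∈ S → w γ = 0) :
    ∃ y ∈ W, ∀ γ, mismatch η γ ∈ insert m S → y γ = u γ := by
  obtain ⟨y, hy, hyS⟩ := hS
  by_cases hm : ∃ γ, mismatch η γ = m
  -- A multiple of `w` corrects `y` at one `γ` of mismatch `m`, hence at all of them.
  · obtain ⟨γ, hγ⟩ := hm
    have hmem : y + ((u γ - y γ) / w γ) • w ∈ W := add_mem hy (W.smul_mem _ hw)
    refine ⟨_, hmem, fun δ hδ => ?_⟩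
    obtain hδ | hδ := hδ
    · refine sub_eq_zero.mp ((apply_eq_zero_iff_of_mismatch_eq hη (sub_mem (hW hmem) hu)
        (hδ.trans hγ.symm)).mpr ?_)
      simp [hwm γ hγ]
    · simp [hwS δ hδ, hyS δ hδ]
  · exact ⟨y, hy, fun γ hγ => hyS γ (hγ.resolve_left fun h => hm ⟨γ, h⟩)⟩

theorem exists_mem_apply_eq_insert_of_apply_ne_zero_iff (hη : Monotone η)
    (hu : u ∈ blockEigenspace η) {W : Submodule K (V n)} (hW : W ≤ blockEigenspace η)
    {S : Set (Fin 2 → ℕ)} (hS : ∃ y ∈ W, ∀ γ, mismatch η γ ∈ S → y γ = u γ) {w : V n}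
    (hw : w ∈ W) {m : Fin 2 → ℕ} (hwm : ∀ γ, w γ ≠ 0 ↔ mismatch η γ = m) (hm : m ∉ S) :
    ∃ y ∈ W, ∀ γ, mismatch η γ ∈ insert m S → y γ = u γ :=
  exists_mem_apply_eq_insert hη hu hW hS hw (fun γ => (hwm γ).mpr) fun γ hγ =>
    by_contra fun h => hm ((hwm γ).mp h ▸ hγ)

end BlockEigenspace

section Mismatch

variable {n : ℕ} {η γ : Fin n → Fin 2}

theorem mismatch_apply_eq_zero_iff {x : Fin 2} :
    mismatch η γ x = 0 ↔ ∀ k, η k = x → γ k = x := by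
  simp [mismatch, Fintype.card_eq_zero_iff, isEmpty_subtype]

theorem mismatch_eq_zero_iff : mismatch η γ = 0 ↔ γ = η := by
  simp only [funext_iff, Pi.zero_apply, mismatch_apply_eq_zero_iff]
  exact ⟨fun h k => h _ k rfl, fun h x k hk => (h k).trans hk⟩

theorem mismatch_update {i : Fin n} {a : Fin 2} (hi : γ i = η i) (ha : a ≠ η i) :
    mismatch η (Function.update γ i a) = mismatch η γ + Pi.single (η i) 1 := by
  have hfilter (x : Fin 2) : (Finset.univ.filter fun k => η k = x ∧ Function.update γ i a k ≠ x) =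
      (Finset.univ.filter fun k => η k = x ∧ γ k ≠ x) ∪ if x = η i then {i} else ∅ := by
    ext k
    obtain rfl | hk := eq_or_ne k i
    · split_ifs <;> grind
    · split_ifs <;> simp [hk]
  funext x
  simp only [mismatch, Fintype.card_subtype, Pi.add_apply, Pi.single_apply, hfilter]
  rw [Finset.card_union_of_disjoint (by split_ifs with hx <;> simp [hx, hi])]
  split_ifs <;> simp

theorem eb_apply_ne_zero_iff : eb η γ ≠ 0 ↔ mismatch η γ = 0 := by
  simp [eb, mismatch_eq_zero_iff]

end Mismatch

section FlipApply

variable {n : ℕ} {a b : Fin 2} {c : Fin n → K} {η γ : Fin n → Fin 2}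

theorem weightedFlip_apply (a b : Fin 2) (c : Fin n → K) (f : V n) (γ : Fin n → Fin 2) :
    weightedFlip a b c f γ = ∑ i, c i * signedFlip a b i f γ := by
  simp [weightedFlip, LinearMap.sum_apply]

theorem exists_ne_zero_of_weightedFlip_apply_ne_zero {f : V n} (h : weightedFlip a b c f γ ≠ 0) :
    ∃ i, γ i = a ∧ f (Function.update γ i b) ≠ 0 := by
  rw [weightedFlip_apply] at h
  obtain ⟨i, -, hi⟩ := Finset.exists_ne_zero_of_sum_ne_zero h
  rw [signedFlip_apply] at hi
  refine ⟨i, by_contra fun hγ => ?_, fun hf => ?_⟩ <;> simp_all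

theorem weightedFlip_apply_ne_zero (hc : ∀ i, c i ≠ 0) {f : V n} {p : Fin n}
    (hp : γ p = a) (hfp : f (Function.update γ p b) ≠ 0)
    (hf : ∀ k ≠ p, f (Function.update γ k b) = 0) : weightedFlip a b c f γ ≠ 0 := by
  have hsum : weightedFlip a b c f γ = c p * signedFlip a b p f γ := by
    rw [weightedFlip_apply]
    refine Finset.sum_eq_single_of_mem p (Finset.mem_univ p) fun k _ hk => ?_
    rw [signedFlip_apply, hf k hk, mul_zero, ite_self, mul_zero]
  rw [hsum, signedFlip_apply, if_pos hp]
  exact mul_ne_zero (hc p) (mul_ne_zero (pow_ne_zero _ (neg_ne_zero.mpr one_ne_zero)) hfp)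

theorem weightedFlip_apply_ne_zero_of_mismatch (hc : ∀ i, c i ≠ 0) (hab : a ≠ b) {f : V n}
    {m : Fin 2 → ℕ} (hm : m b = 0) (hf : ∀ δ, f δ ≠ 0 ↔ mismatch η δ = m)
    (hγ : mismatch η γ = m + Pi.single b 1) : weightedFlip a b c f γ ≠ 0 := by
  have hb : mismatch η γ b ≠ 0 := by simp [hγ]
  rw [Ne, mismatch_apply_eq_zero_iff] at hb
  push Not at hb
  obtain ⟨p, rfl, hγp⟩ := hb
  have hpa : γ p = a := by omega
  refine weightedFlip_apply_ne_zero hc hpa ((hf _).mpr ?_) fun k hk => ?_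
  · have hupdate := mismatch_update (γ := Function.update γ p (η p)) (Function.update_self ..) hγp
    rw [Function.update_idem, Function.update_eq_self, hγ] at hupdate
    exact (add_right_cancel hupdate).symm
  · by_contra hfk
    have hzero := mismatch_apply_eq_zero_iff.mp ((congrFun ((hf _).mp hfk) (η p)).trans hm) p rfl
    exact hγp (by rwa [Function.update_of_ne hk.symm] at hzero)

theorem weightedFlip_eb_apply_ne_zero_iff (hc : ∀ i, c i ≠ 0) (hab : a ≠ b) :
    weightedFlip a b c (eb η) γ ≠ 0 ↔ mismatch η γ = Pi.single b 1 := by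
  constructor
  · intro h
    obtain ⟨i, rfl, hγ⟩ := exists_ne_zero_of_weightedFlip_apply_ne_zero h
    obtain rfl := mismatch_eq_zero_iff.mp (eb_apply_ne_zero_iff.mp hγ)
    have hupdate := mismatch_update (η := Function.update γ i b) (i := i) (a := γ i) rfl (by simpa)
    rwa [Function.update_idem, Function.update_eq_self, mismatch_eq_zero_iff.mpr rfl, zero_add,
      Function.update_self] at hupdate
  · intro h
    exact weightedFlip_apply_ne_zero_of_mismatch hc hab (m := 0) rfl
      (fun _ => eb_apply_ne_zero_iff) (by rw [h, zero_add])

end FlipApply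

section EF

variable {n : ℕ} {η γ : Fin n → Fin 2}

theorem qnum_one : qnum 1 = 1 := by
  have h : q - q⁻¹ ≠ 0 := fun h => by
    have hq := q_ne_zero
    have : q ^ 2 = q ^ 0 := by grind
    exact absurd (q_pow_injective this) (by decide)
  rw [qnum, pow_one, pow_one, div_self h]

theorem Eop_eq_weightedFlip : Eop one' n = weightedFlip 0 1 fun i => q ^ ((i : ℤ) + 1 - n) := by
  refine LinearMap.ext fun f => funext fun γ => ?_
  rw [weightedFlip_apply]
  change ∑ i : Fin n, _ = ∑ i : Fin n, _
  refine Finset.sum_congr rfl fun i _ => ?_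
  have hexp : (-((n - 1 - i : ℕ) : ℤ)) = i + 1 - n := by omega
  simp only [one', qnum_one, Finset.sum_const, Finset.filter_lt_eq_Ioi, Fin.card_Ioi, smul_eq_mul,
    mul_one, hexp, signedFlip_apply]
  split_ifs <;> ring

theorem Fop_eq_weightedFlip : Fop one' n = weightedFlip 1 0 fun i => q ^ (i : ℕ) := by
  refine LinearMap.ext fun f => funext fun γ => ?_
  rw [weightedFlip_apply]
  change ∑ i : Fin n, _ = ∑ i : Fin n, _
  refine Finset.sum_congr rfl fun i _ => ?_
  simp only [one', Finset.sum_const, Finset.filter_gt_eq_Iio, Fin.card_Iio, smul_eq_mul, mul_one,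
    signedFlip_apply]
  split_ifs <;> ring

theorem weightedFlip_mem_centralizer {a b : Fin 2} (hab : a ≠ b) {c : Fin n → K}
    (hc : ∀ i j, i ⋖ j → c j = q * c i) :
    weightedFlip a b c ∈ Subalgebra.centralizer K (heckeGenerators n) := by
  rintro _ ⟨i, j, hij, rfl⟩
  exact (commute_weightedFlip_hecke hij hab (hc i j hij)).symm

theorem Eop_mem_centralizer : Eop one' n ∈ Subalgebra.centralizer K (heckeGenerators n) := by
  rw [Eop_eq_weightedFlip]
  refine weightedFlip_mem_centralizer (by decide) fun i j hij => ?_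
  rw [← Nat.covBy_iff_add_one_eq.mp (Fin.covBy_iff.mp hij), ← zpow_one_add₀ q_ne_zero]
  congr 1
  push_cast
  ring

theorem Fop_mem_centralizer : Fop one' n ∈ Subalgebra.centralizer K (heckeGenerators n) := by
  rw [Fop_eq_weightedFlip]
  refine weightedFlip_mem_centralizer (by decide) fun i j hij => ?_
  rw [← Nat.covBy_iff_add_one_eq.mp (Fin.covBy_iff.mp hij), pow_succ']

theorem adjoin_Eop_Fop_le_centralizer : Algebra.adjoin K {Eop one' n, Fop one' n} ≤
    Subalgebra.centralizer K (heckeGenerators n) := by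
  refine Algebra.adjoin_le ?_
  rintro _ (rfl | rfl)
  exacts [Eop_mem_centralizer, Fop_mem_centralizer]

theorem Eop_eb_apply_ne_zero_iff : Eop one' n (eb η) γ ≠ 0 ↔ mismatch η γ = Pi.single 1 1 := by
  rw [Eop_eq_weightedFlip]
  exact weightedFlip_eb_apply_ne_zero_iff (fun _ => zpow_ne_zero _ q_ne_zero) (by decide)

theorem Fop_eb_apply_ne_zero_iff : Fop one' n (eb η) γ ≠ 0 ↔ mismatch η γ = Pi.single 0 1 := by
  rw [Fop_eq_weightedFlip]
  exact weightedFlip_eb_apply_ne_zero_iff (fun _ => pow_ne_zero _ q_ne_zero) (by decide)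

theorem Fop_Eop_eb_apply_ne_zero (hγ : mismatch η γ = 1) :
    Fop one' n (Eop one' n (eb η)) γ ≠ 0 := by
  rw [Fop_eq_weightedFlip]
  refine weightedFlip_apply_ne_zero_of_mismatch (fun _ => pow_ne_zero _ q_ne_zero) (by decide)
    (m := Pi.single 1 1) rfl (fun _ => Eop_eb_apply_ne_zero_iff) ?_
  rw [hγ]
  decide

theorem exists_mem_adjoin_apply_eb_eq (hη : Monotone η) {u : V n} (hu : u ∈ blockEigenspace η) :
    ∃ Y ∈ Algebra.adjoin K {Eop one' n, Fop one' n}, Y (eb η) = u := by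
  set A := Algebra.adjoin K {Eop one' n, Fop one' n}
  have hE : Eop one' n ∈ A := Algebra.subset_adjoin (by simp)
  have hF : Fop one' n ∈ A := Algebra.subset_adjoin (by simp)
  let W : Submodule K (V n) := A.toSubmodule.map (LinearMap.applyₗ (eb η))
  have hW : W ≤ blockEigenspace η := by
    rintro _ ⟨Y, hY, rfl⟩
    exact apply_eb_mem_blockEigenspace (adjoin_Eop_Fop_le_centralizer hY) η
  have hFE : Fop one' n * Eop one' n ∈ A := mul_mem hF hE
  have h₁₁ := exists_mem_apply_eq_insert (S := ∅) hη hu hW ⟨0, zero_mem W, fun _ => False.elim⟩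
    ⟨_, hFE, rfl⟩ (fun γ hγ => Fop_Eop_eb_apply_ne_zero hγ) fun _ => False.elim
  have h₁₀ := exists_mem_apply_eq_insert_of_apply_ne_zero_iff hη hu hW h₁₁ ⟨_, hF, rfl⟩
    (fun _ => Fop_eb_apply_ne_zero_iff) (by simp [funext_iff])
  have h₀₁ := exists_mem_apply_eq_insert_of_apply_ne_zero_iff hη hu hW h₁₀ ⟨_, hE, rfl⟩
    (fun _ => Eop_eb_apply_ne_zero_iff) (by simp [funext_iff])
  have h₀₀ := exists_mem_apply_eq_insert_of_apply_ne_zero_iff hη hu hW h₀₁ ⟨_, one_mem A, rfl⟩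
    (fun _ => eb_apply_ne_zero_iff) (by simp [funext_iff])
  obtain ⟨_, ⟨Y, hY, rfl⟩, hYu⟩ := h₀₀
  refine ⟨Y, hY, eq_of_apply_eq_of_mismatch_le_one hη (hW ⟨Y, hY, rfl⟩) hu fun γ hγ => ?_⟩
  refine hYu γ ?_
  simp only [Pi.le_def, Fin.forall_fin_two, Pi.one_apply] at hγ
  simp only [insert_empty_eq, Set.mem_insert_iff, Set.mem_singleton_iff, funext_iff,
    Fin.forall_fin_two, Pi.zero_apply, Pi.one_apply, Pi.single_eq_same, ne_eq, zero_ne_one,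
    one_ne_zero, not_false_eq_true, Pi.single_eq_of_ne]
  omega

end EF

section Weight

variable {n : ℕ}

theorem Kop_apply (f : V n) (γ : Fin n → Fin 2) :
    Kop one' n 0 1 f γ = q ^ Fintype.card {k // γ k = 1} * f γ := by
  have hexp : ∑ i : Fin n, (if γ i = 0 then (0 : ℤ) else 1) = Fintype.card {k // γ k = 1} := by
    rw [Fintype.card_subtype, Finset.card_filter]
    push_cast
    exact Finset.sum_congr rfl fun i _ => by split_ifs <;> omega
  simp [Kop, one', hexp]

theorem exists_perm_of_apply_eb_apply_ne_zero {T : Module.End K (V n)}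
    (hT : T * Kop one' n 0 1 = Kop one' n 0 1 * T) {γ δ : Fin n → Fin 2} (h : T (eb γ) δ ≠ 0) :
    ∃ σ : Equiv.Perm (Fin n), γ ∘ σ = δ := by
  have heb : Kop one' n 0 1 (eb γ) = q ^ Fintype.card {k // γ k = 1} • eb γ := by
    funext δ
    rw [Kop_apply]
    by_cases h : δ = γ <;> simp [eb, h]
  have hcomm := congrFun (LinearMap.congr_fun hT (eb γ)) δ
  rw [Module.End.mul_apply, Module.End.mul_apply, heb, map_smul, Kop_apply, Pi.smul_apply,
    smul_eq_mul] at hcomm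
  have hone := q_pow_injective (mul_right_cancel₀ h hcomm)
  have hzero (γ : Fin n → Fin 2) :
      Fintype.card {k // γ k = 0} = n - Fintype.card {k // γ k = 1} := by
    have hcompl := Fintype.card_subtype_compl fun k => γ k = 1
    rw [Fintype.card_fin] at hcompl
    exact (Fintype.card_congr (Equiv.subtypeEquivRight fun k => by omega)).trans hcompl
  refine exists_perm_comp_eq_of_card_fiber_eq (Fin.forall_fin_two.mpr ⟨?_, hone⟩)
  rw [hzero, hzero, hone]

end Weight

section Bicommutant

variable {n : ℕ} {η : Fin n → Fin 2}

theorem apply_eb_comp_eq_of_apply_eb_eq {X Y : Module.End K (V n)}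
    (hX : X ∈ Subalgebra.centralizer K (heckeGenerators n))
    (hY : Y ∈ Subalgebra.centralizer K (heckeGenerators n)) (h : X (eb η) = Y (eb η))
    (σ : Equiv.Perm (Fin n)) : X (eb (η ∘ σ)) = Y (eb (η ∘ σ)) := by
  have hswap {i j : Fin n} (hij : i ⋖ j) {γ : Fin n → Fin 2} (hγ : X (eb γ) = Y (eb γ)) :
      X (eb (γ ∘ Equiv.swap i j)) = Y (eb (γ ∘ Equiv.swap i j)) := by
    by_cases h : γ i = γ j
    · rwa [comp_swap_of_apply_eq h]
    have hXγ := LinearMap.congr_fun (hX _ ⟨i, j, hij, rfl⟩) (eb γ)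
    have hYγ := LinearMap.congr_fun (hY _ ⟨i, j, hij, rfl⟩) (eb γ)
    rw [Module.End.mul_apply, Module.End.mul_apply, hecke_eb, if_neg h, map_add, map_smul,
      ← sub_eq_iff_eq_add'] at hXγ hYγ
    rw [← hXγ, ← hYγ, hγ]
  have hσ : σ ∈ Subgroup.closure _ :=
    mem_closure_swap_covBy_of_comp_eq (f := fun _ => ()) monotone_const rfl
  induction hσ using Subgroup.closure_induction_right with
  | one => exact h
  | mul_right τ _ ρ hρ ih =>
    obtain ⟨i, j, hij, -, rfl⟩ := hρ
    exact hswap hij ih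
  | mul_inv_cancel τ _ ρ hρ ih =>
    obtain ⟨i, j, hij, -, rfl⟩ := hρ
    rw [Equiv.swap_inv]
    exact hswap hij ih

theorem exists_mem_adjoin_apply_eb_comp_eq {X : Module.End K (V n)}
    (hX : X ∈ Subalgebra.centralizer K (heckeGenerators n)) (γ : Fin n → Fin 2) :
    ∃ Y ∈ Algebra.adjoin K {Eop one' n, Fop one' n}, ∀ σ : Equiv.Perm (Fin n),
      X (eb (γ ∘ σ)) = Y (eb (γ ∘ σ)) := by
  obtain ⟨Y, hY, hYX⟩ := exists_mem_adjoin_apply_eb_eq (Tuple.monotone_sort γ)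
    (apply_eb_mem_blockEigenspace hX _)
  refine ⟨Y, hY, fun σ => ?_⟩
  have h := apply_eb_comp_eq_of_apply_eb_eq hX (adjoin_Eop_Fop_le_centralizer hY) hYX.symm
    ((Tuple.sort γ)⁻¹ * σ)
  have hγ : (γ ∘ Tuple.sort γ) ∘ ⇑((Tuple.sort γ)⁻¹ * σ) = γ ∘ σ :=
    funext fun k => congrArg γ ((Tuple.sort γ).apply_symm_apply _)
  rwa [hγ] at h

theorem eq_sum_smul_eb (f : V n) : f = ∑ γ, f γ • eb γ := by
  funext δ
  simp [eb]

theorem mem_centralizer_centralizer_of_commute {T : Module.End K (V n)}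
    (hE : Commute T (Eop one' n)) (hF : Commute T (Fop one' n))
    (hK : Commute T (Kop one' n 0 1)) :
    T ∈ Subalgebra.centralizer K
      (Subalgebra.centralizer K (heckeGenerators n) : Set (Module.End K (V n))) := by
  intro X hX
  have hEF : Algebra.adjoin K {Eop one' n, Fop one' n} ≤ Subalgebra.centralizer K {T} := by
    refine Algebra.adjoin_le ?_
    rintro _ (rfl | rfl) _ rfl
    exacts [hE, hF]
  have heb (γ : Fin n → Fin 2) : X (T (eb γ)) = T (X (eb γ)) := by
    obtain ⟨Y, hY, hXY⟩ := exists_mem_adjoin_apply_eb_comp_eq hX γ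
    have hTY : T (Y (eb γ)) = Y (T (eb γ)) := LinearMap.congr_fun (hEF hY T rfl) (eb γ)
    have hXYγ : X (eb γ) = Y (eb γ) := hXY 1
    rw [hXYγ, hTY, eq_sum_smul_eb (T (eb γ)), map_sum, map_sum]
    refine Finset.sum_congr rfl fun δ _ => ?_
    by_cases hδ : T (eb γ) δ = 0
    · simp [hδ]
    · obtain ⟨σ, rfl⟩ := exists_perm_of_apply_eb_apply_ne_zero hK hδ
      rw [map_smul, map_smul, hXY]
  refine LinearMap.ext fun f => ?_
  rw [eq_sum_smul_eb f]
  simp only [map_sum, map_smul, Module.End.mul_apply, heb]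

end Bicommutant

/-!
STATEMENT 7: Super Schur–Weyl duality, surjectivity: every `ℂ(q)`-linear endomorphism of
`V^{⊗n}` commuting with the actions of `E`, `F` and all `q^h` lies in the unital
subalgebra of `End(V^{⊗n})` generated by `Ȟ_1,…,Ȟ_{n-1}`; i.e. the algebra homomorphism
`H_n → End_{U_q(gl(1|1))}(V^{⊗n})`, `H_i ↦ Ȟ_i`, is surjective.
-/

theorem statement7 (n : ℕ) (T : Module.End K (V n))
    (hE : T * Eop one' n = Eop one' n * T)
    (hF : T * Fop one' n = Fop one' n * T)
    (hK : ∀ c d : ℤ, T * Kop one' n c d = Kop one' n c d * T) :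
    T ∈ Algebra.adjoin K {X : Module.End K (V n) | ∃ (i : ℕ) (hi : i + 1 < n), X = Hop n i hi} := by
  rw [setOf_Hop_eq_heckeGenerators,
    ← centralizer_centralizer_eq_self (Algebra.adjoin K (heckeGenerators n))]
  intro X hX
  exact mem_centralizer_centralizer_of_commute hE hF (hK 0 1) X
    (Subalgebra.centralizer_le K _ _ Algebra.subset_adjoin hX)
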